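/- Let A be an n × n real matrix, B an n × m real matrix, T ≥ 1, and let R be a (Tm) × (Tm) symmetric positive semidefinite real matrix with m × m blocks R_{ij}, i, j ∈ {1,…,T}. For each t ∈ {1,…,T} define R^X_t := Σ_{i=1}^{t} Σ_{j=1}^{t} A^{t−i} B R_{ij} Bᵀ (A^{t−j})ᵀ. If for every t ∈ {1,…,T} the cross terms satisfy Σ_{i=1}^{t} Σ_{j=i+1}^{t} tr( Bᵀ (A^{t−j})ᵀ A^{t−i} B R_{ij} ) ≥ 0, then Σ_{t=1}^{T} tr( R^X_t ) ≥ λ_min(BᵀB) · Σ_{t=1}^{T} tr( R_{tt} ). -/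

import Mathlib

open scoped Matrix

/-!
By cyclicity of the trace, `tr (RX t)` is a double sum over `i, j ≤ t` of a quantity that is
conjugate-symmetric in `(i, j)`, hence its diagonal plus twice the real part of the cross terms,
which are nonnegative by assumption. The diagonal terms are traces of the positive semidefinite
matrices `(A^{t-i} B) R_{ii} (A^{t-i} B)ᵀ`, so all of them can be dropped but the one for `i = t`,
which is `tr (Bᵀ B R_{tt}) ≥ λ_min(Bᵀ B) tr R_{tt}`.
-/

section SymmetricSums

variable {τ M : Type*} [LinearOrder τ] [AddCommMonoid M]

lemma sum_sum_filter_gt_eq_sum_sum_filter_lt (s : Finset τ) (f : τ → τ → M) :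
    ∑ i ∈ s, ∑ j ∈ s with j < i, f i j = ∑ i ∈ s, ∑ j ∈ s with i < j, f j i :=
  Finset.sum_comm' fun _ _ => by grind

lemma sum_eq_add_sum_filter_lt_add_sum_filter_gt {s : Finset τ} {i : τ} (hi : i ∈ s) (f : τ → M) :
    ∑ j ∈ s, f j = f i + (∑ j ∈ s with i < j, f j + ∑ j ∈ s with j < i, f j) := by
  have hgt : {j ∈ s.erase i | i < j} = {j ∈ s | i < j} := by grind
  have hlt : {j ∈ s.erase i | ¬i < j} = {j ∈ s | j < i} := by grind
  rw [← Finset.add_sum_erase s f hi,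
    ← Finset.sum_filter_add_sum_filter_not (s.erase i) (fun j => i < j), hgt, hlt]

lemma sum_sum_eq_sum_diag_add_two_nsmul_sum_filter_lt (s : Finset τ) {f : τ → τ → M}
    (hf : ∀ i j, f i j = f j i) :
    ∑ i ∈ s, ∑ j ∈ s, f i j = ∑ i ∈ s, f i i + 2 • ∑ i ∈ s, ∑ j ∈ s with i < j, f i j := by
  calc
    ∑ i ∈ s, ∑ j ∈ s, f i j
      = ∑ i ∈ s, (f i i + (∑ j ∈ s with i < j, f i j + ∑ j ∈ s with j < i, f i j)) :=
        Finset.sum_congr rfl fun i hi => sum_eq_add_sum_filter_lt_add_sum_filter_gt hi (f i)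
    _ = ∑ i ∈ s, f i i
          + (∑ i ∈ s, ∑ j ∈ s with i < j, f i j + ∑ i ∈ s, ∑ j ∈ s with i < j, f j i) := by
        rw [Finset.sum_add_distrib, Finset.sum_add_distrib,
          sum_sum_filter_gt_eq_sum_sum_filter_lt]
    _ = ∑ i ∈ s, f i i + 2 • ∑ i ∈ s, ∑ j ∈ s with i < j, f i j := by
        simp only [two_nsmul, hf]

end SymmetricSums

section Blocks

variable {α τ σ ι : Type*}

lemma isHermitian_comp_symm [Star α] {R : Matrix (τ × ι) (τ × ι) α} (hR : R.IsHermitian) :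
    ((Matrix.comp τ τ ι ι α).symm R).IsHermitian := by
  ext i j a b
  exact hR.apply (i, a) (j, b)

lemma posSemidef_comp_symm_diag [Ring α] [PartialOrder α] [StarRing α]
    {R : Matrix (τ × ι) (τ × ι) α} (hR : R.PosSemidef) (t : τ) :
    ((Matrix.comp τ τ ι ι α).symm R t t).PosSemidef :=
  hR.submatrix (Prod.mk t)

variable [Fintype σ] [Fintype ι] [NonUnitalCommSemiring α]

lemma star_trace_conjTranspose_mul_mul [StarRing α] {R : Matrix τ τ (Matrix ι ι α)}
    (hR : R.IsHermitian) (G : τ → Matrix σ ι α) (i j : τ) :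
    star ((G j)ᴴ * G i * R i j).trace = ((G i)ᴴ * G j * R j i).trace := by
  have hij : (R i j)ᴴ = R j i := hR.apply j i
  rw [← Matrix.trace_conjTranspose, Matrix.conjTranspose_mul, Matrix.conjTranspose_mul,
    Matrix.conjTranspose_conjTranspose, hij, Matrix.trace_mul_comm]

lemma trace_sum_sum_mul_mul_conjTranspose [Star α] (s : Finset τ)
    (R : Matrix τ τ (Matrix ι ι α)) (G : τ → Matrix σ ι α) :
    (∑ i ∈ s, ∑ j ∈ s, G i * R i j * (G j)ᴴ).trace
      = ∑ i ∈ s, ∑ j ∈ s, ((G j)ᴴ * G i * R i j).trace := by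
  simp only [Matrix.trace_sum]
  refine Finset.sum_congr rfl fun i _ => Finset.sum_congr rfl fun j _ => ?_
  rw [Matrix.trace_mul_comm, Matrix.mul_assoc]

end Blocks

section TraceInequalities

open scoped ComplexOrder MatrixOrder

variable {𝕜 τ σ ι : Type*} [RCLike 𝕜] [Fintype σ] [Fintype ι]

lemma iInf_eigenvalues_smul_one_le [DecidableEq ι] {M : Matrix ι ι 𝕜} (hM : M.IsHermitian) :
    (⨅ i, hM.eigenvalues i) • (1 : Matrix ι ι 𝕜) ≤ M := by
  rw [← Algebra.algebraMap_eq_smul_one]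
  refine algebraMap_le_of_le_spectrum (fun x hx => ?_) hM
  obtain ⟨i, rfl⟩ := hM.spectrum_real_eq_range_eigenvalues ▸ hx
  exact ciInf_le (Set.finite_range _).bddBelow i

lemma trace_mul_nonneg {M P : Matrix ι ι 𝕜} (hM : M.PosSemidef) (hP : P.PosSemidef) :
    0 ≤ (M * P).trace := by
  classical
  obtain ⟨N, rfl⟩ := CStarAlgebra.nonneg_iff_eq_star_mul_self.mp hM.nonneg
  rw [Matrix.mul_assoc, Matrix.trace_mul_comm]
  exact (hP.mul_mul_conjTranspose_same N).trace_nonneg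

lemma trace_mul_le_trace_mul_of_le {M N P : Matrix ι ι 𝕜} (hMN : M ≤ N) (hP : P.PosSemidef) :
    (M * P).trace ≤ (N * P).trace := by
  rw [← sub_nonneg, ← Matrix.trace_sub, ← Matrix.sub_mul]
  exact trace_mul_nonneg (Matrix.le_iff.mp hMN) hP

lemma mul_re_trace_le_re_trace_mul [DecidableEq ι] {μ : ℝ} {M P : Matrix ι ι 𝕜}
    (hM : μ • (1 : Matrix ι ι 𝕜) ≤ M) (hP : P.PosSemidef) :
    μ * RCLike.re P.trace ≤ RCLike.re (M * P).trace := by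
  have h := RCLike.re_le_re (trace_mul_le_trace_mul_of_le hM hP)
  rwa [Matrix.smul_mul, Matrix.one_mul, Matrix.trace_smul, RCLike.smul_re] at h

variable [LinearOrder τ] [DecidableEq ι]

lemma mul_re_trace_le_re_trace_sum_sum {s : Finset τ} {t : τ} (ht : t ∈ s)
    {R : Matrix τ τ (Matrix ι ι 𝕜)} (hR : R.IsHermitian) (hdiag : ∀ i ∈ s, (R i i).PosSemidef)
    {G : τ → Matrix σ ι 𝕜} {μ : ℝ} (hμ : μ • (1 : Matrix ι ι 𝕜) ≤ (G t)ᴴ * G t)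
    (hcross : 0 ≤ ∑ i ∈ s, ∑ j ∈ s with i < j, RCLike.re ((G j)ᴴ * G i * R i j).trace) :
    μ * RCLike.re (R t t).trace
      ≤ RCLike.re (∑ i ∈ s, ∑ j ∈ s, G i * R i j * (G j)ᴴ).trace := by
  have hsymm (i j : τ) : RCLike.re ((G j)ᴴ * G i * R i j).trace
      = RCLike.re ((G i)ᴴ * G j * R j i).trace := by
    rw [← star_trace_conjTranspose_mul_mul hR, RCLike.star_def, RCLike.conj_re]
  have hterm (i : τ) (hi : i ∈ s) : 0 ≤ RCLike.re ((G i)ᴴ * G i * R i i).trace :=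
    (RCLike.nonneg_iff.mp
      (trace_mul_nonneg (Matrix.posSemidef_conjTranspose_mul_self (G i)) (hdiag i hi))).1
  calc
    μ * RCLike.re (R t t).trace
      ≤ RCLike.re ((G t)ᴴ * G t * R t t).trace := mul_re_trace_le_re_trace_mul hμ (hdiag t ht)
    _ ≤ ∑ i ∈ s, RCLike.re ((G i)ᴴ * G i * R i i).trace := Finset.single_le_sum hterm ht
    _ ≤ ∑ i ∈ s, RCLike.re ((G i)ᴴ * G i * R i i).trace
          + 2 • ∑ i ∈ s, ∑ j ∈ s with i < j, RCLike.re ((G j)ᴴ * G i * R i j).trace :=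
        le_add_of_nonneg_right (nsmul_nonneg hcross 2)
    _ = RCLike.re (∑ i ∈ s, ∑ j ∈ s, G i * R i j * (G j)ᴴ).trace := by
        rw [trace_sum_sum_mul_mul_conjTranspose,
          ← sum_sum_eq_sum_diag_add_two_nsmul_sum_filter_lt s hsymm]
        simp only [map_sum]

-- `G t i` is the response at time `t` to the input at time `i`, as in `G t i = A ^ (t - i) * B`;
-- `μ t` plays the role of the smallest eigenvalue of `(G t t)ᴴ * G t t`.
theorem stmt19_general [Fintype τ] (G : τ → τ → Matrix σ ι 𝕜)
    (R : Matrix τ τ (Matrix ι ι 𝕜)) (hR : R.IsHermitian) (hdiag : ∀ t, (R t t).PosSemidef)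
    (μ : τ → ℝ) (hμ : ∀ t, μ t • (1 : Matrix ι ι 𝕜) ≤ (G t t)ᴴ * G t t)
    (hcross : ∀ t, 0 ≤ ∑ i with i ≤ t, ∑ j with i < j ∧ j ≤ t,
      RCLike.re ((G t j)ᴴ * G t i * R i j).trace) :
    ∑ t, μ t * RCLike.re (R t t).trace
      ≤ ∑ t, RCLike.re (∑ i with i ≤ t, ∑ j with j ≤ t, G t i * R i j * (G t j)ᴴ).trace := by
  refine Finset.sum_le_sum fun t _ =>
    mul_re_trace_le_re_trace_sum_sum (by simp) hR (fun i _ => hdiag i) (hμ t) ?_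
  simpa only [Finset.filter_filter, and_comm] using hcross t

end TraceInequalities

/-- Deterministic core of the input-to-state distortion bound. With conditional input
cross-covariance blocks `Rblk i j` of a PSD `(Tm) × (Tm)` matrix `R`, conditional state
covariances `RX t = Σ_{i≤t} Σ_{j≤t} A^{t-i} B (Rblk i j) Bᵀ (A^{t-j})ᵀ` (0-indexed), and
nonnegative cross terms, one has
`Σ_t tr(RX t) ≥ λ_min(BᵀB) Σ_t tr(Rblk t t)`. -/
theorem stmt19 {n m : ℕ} (T : ℕ) (hT : 1 ≤ T)
    (A : Matrix (Fin n) (Fin n) ℝ) (B : Matrix (Fin n) (Fin m) ℝ)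
    (R : Matrix (Fin T × Fin m) (Fin T × Fin m) ℝ) (hR : R.PosSemidef)
    (Rblk : Fin T → Fin T → Matrix (Fin m) (Fin m) ℝ)
    (hblk : ∀ i j a b, Rblk i j a b = R (i, a) (j, b))
    (RX : Fin T → Matrix (Fin n) (Fin n) ℝ)
    (hRX : ∀ t : Fin T, RX t
      = ∑ i ∈ Finset.univ.filter (fun i : Fin T => i ≤ t),
        ∑ j ∈ Finset.univ.filter (fun j : Fin T => j ≤ t),
          A ^ ((t : ℕ) - (i : ℕ)) * B * Rblk i j * Bᵀ * (A ^ ((t : ℕ) - (j : ℕ)))ᵀ)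
    (hH : (Bᵀ * B).IsHermitian)
    (hcross : ∀ t : Fin T,
      0 ≤ ∑ i ∈ Finset.univ.filter (fun i : Fin T => i ≤ t),
          ∑ j ∈ Finset.univ.filter (fun j : Fin T => i < j ∧ j ≤ t),
            Matrix.trace (Bᵀ * (A ^ ((t : ℕ) - (j : ℕ)))ᵀ * A ^ ((t : ℕ) - (i : ℕ)) * B
              * Rblk i j)) :
    (⨅ i, hH.eigenvalues i) * ∑ t : Fin T, Matrix.trace (Rblk t t)
      ≤ ∑ t : Fin T, Matrix.trace (RX t) := by
  obtain rfl : Rblk = (Matrix.comp _ _ _ _ ℝ).symm R := by ext i j a b; exact hblk i j a b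
  simpa [hRX, Finset.mul_sum, Matrix.mul_assoc] using
    stmt19_general (fun t i : Fin T => A ^ ((t : ℕ) - (i : ℕ)) * B) _
      (isHermitian_comp_symm hR.isHermitian) (posSemidef_comp_symm_diag hR)
      (fun _ => ⨅ i, hH.eigenvalues i) (fun _ => by simpa using iInf_eigenvalues_smul_one_le hH)
      (by simpa [Matrix.mul_assoc] using hcross)
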